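/- Let G be a group, let d ≥ 1, and let M be a module over the integral group ring ℤG. Suppose that P_{d+1} → P_d → ⋯ → P₁ → P₀ → M → 0 and Q_{d+1} → Q_d → ⋯ → Q₁ → Q₀ → M → 0 are two partial resolutions of M by finitely generated free ℤG-modules with chosen finite ℤG-bases (exact at P_i and Q_i for all 0 ≤ i ≤ d, with the maps to M surjective). Let FV_P, FV_Q : ℕ → ℕ ∪ {∞} be the filling functions FV_P(k) = sup{‖x‖_{∂,P} : x ∈ ker(P_d → P_{d−1}), ‖x‖_{P_d} ≤ k} and similarly for FV_Q, where ‖x‖_{∂,P} = min{‖y‖_{P_{d+1}} : y ∈ P_{d+1}, y ↦ x} (for d = 1, ker(P_1 → P_0) is meant). Then there exists a constant C > 0 such that FV_P(n) ≤ C · FV_Q(Cn + C) + Cn + C and FV_Q(n) ≤ C · FV_P(Cn + C) + Cn + C for all n ∈ ℕ; that is, the growth rate class of the (d+1)-filling function FV_M^{d+1} depends only on M. -/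

import Mathlib

open Finsupp


/-- The ℓ1-norm on the free ℤG-module with basis `Fin m`, identified with the
permutation module on the free G-set `Fin m × G` (the chosen ℤG-basis being the
elements `(i, 1)`). -/
def l1 {α : Type*} (x : α →₀ ℤ) : ℕ := x.support.sum fun s => (x s).natAbs

/-- The action of `g : G` on the free ℤG-module `ℤ[Fin m × G]`, permuting the
basis by left multiplication on the second coordinate. -/
def gactF {G : Type*} [Group G] {m : ℕ} (g : G) (x : (Fin m × G) →₀ ℤ) :
    (Fin m × G) →₀ ℤ :=
  Finsupp.equivMapDomain (Equiv.prodCongr (Equiv.refl (Fin m)) (Equiv.mulLeft g)) x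

/-- The filling norm `‖x‖_∂ = min{‖y‖ : y ↦ x}` of `x` with respect to the map
`δ`, valued in `ℕ∞` (the infimum of the empty set being `∞`). -/
noncomputable def fillNorm {G : Type*} [Group G] {m m' : ℕ}
    (δ : ((Fin m' × G) →₀ ℤ) →+ ((Fin m × G) →₀ ℤ))
    (x : (Fin m × G) →₀ ℤ) : ℕ∞ :=
  ⨅ y : {y : (Fin m' × G) →₀ ℤ // δ y = x}, ((l1 (y : (Fin m' × G) →₀ ℤ) : ℕ∞))

/-- The filling function `FV(k) = sup{‖x‖_∂ : x ∈ ker δ, ‖x‖ ≤ k}`, where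
fillings are taken along `δtop`, valued in `ℕ∞` (the supremum of the empty set
being `0`). -/
noncomputable def FV {G : Type*} [Group G] {m m' m'' : ℕ}
    (δtop : ((Fin m'' × G) →₀ ℤ) →+ ((Fin m' × G) →₀ ℤ))
    (δ : ((Fin m' × G) →₀ ℤ) →+ ((Fin m × G) →₀ ℤ)) (k : ℕ) : ℕ∞ :=
  sSup {v : ℕ∞ | ∃ x : (Fin m' × G) →₀ ℤ, δ x = 0 ∧ l1 x ≤ k ∧ v = fillNorm δtop x}


section Helpers

variable {G : Type*} [Group G]

theorem gactF_add' {m : ℕ} (g : G) (x y : (Fin m × G) →₀ ℤ) :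
    gactF g (x + y) = gactF g x + gactF g y := by
  ext a; simp [gactF]

theorem gactF_sub' {m : ℕ} (g : G) (x y : (Fin m × G) →₀ ℤ) :
    gactF g (x - y) = gactF g x - gactF g y := by
  ext a; simp [gactF]

theorem gactF_zero' {m : ℕ} (g : G) : gactF g (0 : (Fin m × G) →₀ ℤ) = 0 := by
  ext a; simp [gactF]

theorem gactF_mul' {m : ℕ} (g h : G) (x : (Fin m × G) →₀ ℤ) :
    gactF (g * h) x = gactF g (gactF h x) := by
  ext ⟨i, a⟩
  change x (i, (Equiv.mulLeft (g * h)).symm a) = x (i, (Equiv.mulLeft h).symm ((Equiv.mulLeft g).symm a))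
  simp [Equiv.mulLeft_symm_apply, mul_assoc, -Equiv.Perm.mul_def]
  try rfl

theorem gactF_single' {m : ℕ} (g h : G) (i : Fin m) (c : ℤ) :
    gactF g (single (i, h) c) = single (i, g * h) c := by
  simp [gactF, Finsupp.equivMapDomain_single]

/-- equivariance -/
def Eqv {m m' : ℕ} (φ : ((Fin m × G) →₀ ℤ) →+ ((Fin m' × G) →₀ ℤ)) : Prop :=
  ∀ (g : G) (x : (Fin m × G) →₀ ℤ), φ (gactF g x) = gactF g (φ x)

theorem Eqv.comp {a b c : ℕ} {φ : ((Fin b × G) →₀ ℤ) →+ ((Fin c × G) →₀ ℤ)}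
    {ψ : ((Fin a × G) →₀ ℤ) →+ ((Fin b × G) →₀ ℤ)} (h : Eqv φ) (h' : Eqv ψ) :
    Eqv (φ.comp ψ) := fun g x => by simp [h' g x, h g]

theorem Eqv.sub {a b : ℕ} {φ ψ : ((Fin a × G) →₀ ℤ) →+ ((Fin b × G) →₀ ℤ)}
    (h : Eqv φ) (h' : Eqv ψ) : Eqv (φ - ψ) := fun g x => by
  simp [h' g x, h g, gactF_sub']

theorem Eqv.id {a : ℕ} : Eqv (AddMonoidHom.id ((Fin a × G) →₀ ℤ)) := fun g x => rfl

/-- extension of a map from the basis -/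
noncomputable def extM {m m' : ℕ} (y : Fin m → ((Fin m' × G) →₀ ℤ)) :
    ((Fin m × G) →₀ ℤ) →+ ((Fin m' × G) →₀ ℤ) :=
  Finsupp.liftAddHom fun s => zmultiplesHom _ (gactF s.2 (y s.1))

theorem extM_single {m m' : ℕ} (y : Fin m → ((Fin m' × G) →₀ ℤ)) (i : Fin m) (g : G) :
    extM y (single (i, g) 1) = gactF g (y i) := by
  simp [extM]

theorem ext_one {α A : Type*} [AddCommGroup A] {φ ψ : (α →₀ ℤ) →+ A}
    (h : ∀ s, φ (single s 1) = ψ (single s 1)) : φ = ψ := by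
  apply Finsupp.addHom_ext'
  intro s
  apply AddMonoidHom.ext_int
  simpa using h s

theorem extM_eqv {m m' : ℕ} (y : Fin m → ((Fin m' × G) →₀ ℤ)) : Eqv (extM y) := by
  intro g
  let L : ((Fin m × G) →₀ ℤ) →+ ((Fin m × G) →₀ ℤ) :=
    ⟨⟨gactF g, gactF_zero' g⟩, gactF_add' g⟩
  let R : ((Fin m' × G) →₀ ℤ) →+ ((Fin m' × G) →₀ ℤ) :=
    ⟨⟨gactF g, gactF_zero' g⟩, gactF_add' g⟩
  have : (extM y).comp L = R.comp (extM y) := by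
    apply ext_one
    rintro ⟨i, h⟩
    change extM y (gactF g _) = gactF g (extM y _)
    rw [gactF_single', extM_single, extM_single, gactF_mul']
  exact fun x => DFunLike.congr_fun this x

theorem lift_exists {m m' : ℕ} {A : Type*} [AddCommGroup A] (act : G → A → A)
    (φ : ((Fin m × G) →₀ ℤ) →+ A) (hφ : ∀ g x, φ (gactF g x) = act g (φ x))
    (ψ : ((Fin m' × G) →₀ ℤ) →+ A) (hψ : ∀ g x, ψ (gactF g x) = act g (ψ x))
    (h : ∀ x, ∃ y, ψ y = φ x) :
    ∃ f : ((Fin m × G) →₀ ℤ) →+ ((Fin m' × G) →₀ ℤ), Eqv f ∧ ∀ x, ψ (f x) = φ x := by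
  choose y hy using fun i : Fin m => h (single (i, 1) 1)
  refine ⟨extM y, extM_eqv y, ?_⟩
  have : ψ.comp (extM y) = φ := by
    apply ext_one
    rintro ⟨i, g⟩
    rw [AddMonoidHom.comp_apply, extM_single, hψ, hy, ← hφ, gactF_single', mul_one]
  exact fun x => DFunLike.congr_fun this x

theorem l1_eq_sum {α : Type*} (x : α →₀ ℤ) (s : Finset α) (h : x.support ⊆ s) :
    l1 x = ∑ a ∈ s, (x a).natAbs :=
  Finset.sum_subset h (by intro a _ ha; simpa using ha)

theorem l1_add {α : Type*} (x y : α →₀ ℤ) : l1 (x + y) ≤ l1 x + l1 y := by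
  classical
  rw [l1_eq_sum (x + y) (x.support ∪ y.support) Finsupp.support_add,
    l1_eq_sum x (x.support ∪ y.support) Finset.subset_union_left,
    l1_eq_sum y (x.support ∪ y.support) Finset.subset_union_right, ← Finset.sum_add_distrib]
  exact Finset.sum_le_sum fun a _ => Int.natAbs_add_le _ _

theorem l1_neg {α : Type*} (x : α →₀ ℤ) : l1 (-x) = l1 x := by
  simp [l1]

theorem l1_sub {α : Type*} (x y : α →₀ ℤ) : l1 (x - y) ≤ l1 x + l1 y := by
  rw [sub_eq_add_neg, ← l1_neg y]; exact l1_add _ _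

theorem l1_smul {α : Type*} (c : ℤ) (x : α →₀ ℤ) : l1 (c • x) = c.natAbs * l1 x := by
  rw [l1_eq_sum (c • x) x.support Finsupp.support_smul, l1, Finset.mul_sum]
  simp [Int.natAbs_mul]

theorem l1_gact {m : ℕ} (g : G) (x : (Fin m × G) →₀ ℤ) : l1 (gactF g x) = l1 x := by
  unfold l1 gactF
  simp [Finsupp.equivMapDomain, Prod.map]

theorem bounded {m m' : ℕ} (φ : ((Fin m × G) →₀ ℤ) →+ ((Fin m' × G) →₀ ℤ)) (hφ : Eqv φ) :
    ∃ C : ℕ, ∀ x, l1 (φ x) ≤ C * l1 x := by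
  let C := ∑ i : Fin m, l1 (φ (single (i, 1) 1))
  have h1 : ∀ s : Fin m × G, l1 (φ (single s 1)) ≤ C := by
    rintro ⟨i, g⟩
    have : (single (i, g) 1 : (Fin m × G) →₀ ℤ) = gactF g (single (i, 1) 1) := by
      rw [gactF_single', mul_one]
    rw [this, hφ, l1_gact]
    exact Finset.single_le_sum (f := fun i : Fin m => l1 (φ (single (i, 1) 1)))
      (fun _ _ => Nat.zero_le _) (Finset.mem_univ i)
  refine ⟨C, fun x => ?_⟩
  have hsum : ∀ s : Finset (Fin m × G),
      l1 (∑ a ∈ s, φ (single a (x a))) ≤ ∑ a ∈ s, l1 (φ (single a (x a))) := by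
    classical
    intro s
    induction s using Finset.induction_on with
    | empty => simp [l1]
    | insert a s ha ih =>
      rw [Finset.sum_insert ha, Finset.sum_insert ha]
      exact (l1_add _ _).trans (by omega)
  have hx : φ x = ∑ a ∈ x.support, φ (single a (x a)) := by
    conv_lhs => rw [← Finsupp.sum_single x]
    simp [Finsupp.sum]
  rw [hx]
  refine (hsum _).trans ?_
  rw [l1, Finset.mul_sum]
  refine Finset.sum_le_sum fun a _ => ?_
  have : (single a (x a) : (Fin m × G) →₀ ℤ) = (x a) • single a 1 := by simp
  rw [this, map_zsmul, l1_smul, mul_comm]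
  exact Nat.mul_le_mul_right _ (h1 a)

theorem FV_mono {m m' m'' : ℕ}
    (δtop : ((Fin m'' × G) →₀ ℤ) →+ ((Fin m' × G) →₀ ℤ))
    (δ : ((Fin m' × G) →₀ ℤ) →+ ((Fin m × G) →₀ ℤ)) : Monotone (FV δtop δ) := by
  intro a b hab
  apply sSup_le_sSup
  rintro v ⟨x, h1, h2, h3⟩
  exact ⟨x, h1, h2.trans hab, h3⟩

theorem one_dir (e : ℕ)
    (M : Type*) [AddCommGroup M] [DistribMulAction G M]
    (kP kQ : ℕ → ℕ)
    (δP : ∀ i : ℕ, ((Fin (kP (i + 1)) × G) →₀ ℤ) →+ ((Fin (kP i) × G) →₀ ℤ))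
    (εP : ((Fin (kP 0) × G) →₀ ℤ) →+ M)
    (δQ : ∀ i : ℕ, ((Fin (kQ (i + 1)) × G) →₀ ℤ) →+ ((Fin (kQ i) × G) →₀ ℤ))
    (εQ : ((Fin (kQ 0) × G) →₀ ℤ) →+ M)
    (hδPequiv : ∀ i ≤ e + 1, Eqv (δP i))
    (hεPequiv : ∀ (g : G) (x : (Fin (kP 0) × G) →₀ ℤ), εP (gactF g x) = g • εP x)
    (hδQequiv : ∀ i ≤ e + 1, Eqv (δQ i))
    (hεQequiv : ∀ (g : G) (x : (Fin (kQ 0) × G) →₀ ℤ), εQ (gactF g x) = g • εQ x)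
    (hεPsurj : Function.Surjective εP) (hεQsurj : Function.Surjective εQ)
    (hP0 : ∀ x, εP x = 0 ↔ ∃ y, δP 0 y = x)
    (hPexact : ∀ i < e + 1, ∀ x, δP i x = 0 ↔ ∃ y, δP (i + 1) y = x)
    (hQ0 : ∀ x, εQ x = 0 ↔ ∃ y, δQ 0 y = x)
    (hQexact : ∀ i < e + 1, ∀ x, δQ i x = 0 ↔ ∃ y, δQ (i + 1) y = x) :
    ∃ C₀ : ℕ, ∀ C ≥ C₀, ∀ n : ℕ,
      FV (δP (e + 1)) (δP e) n ≤
        (C : ℕ∞) * FV (δQ (e + 1)) (δQ e) (C * n + C) + ((C * n + C : ℕ) : ℕ∞) := by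
  have hPP0 : ∀ x, εP (δP 0 x) = 0 := fun x => (hP0 _).2 ⟨x, rfl⟩
  have hQQ0 : ∀ x, εQ (δQ 0 x) = 0 := fun x => (hQ0 _).2 ⟨x, rfl⟩
  have hPP : ∀ i < e + 1, ∀ x, δP i (δP (i + 1) x) = 0 :=
    fun i hi x => (hPexact i hi _).2 ⟨x, rfl⟩
  have hQQ : ∀ i < e + 1, ∀ x, δQ i (δQ (i + 1) x) = 0 :=
    fun i hi x => (hQexact i hi _).2 ⟨x, rfl⟩
  have key : ∀ n ≤ e, ∃ (f : ((Fin (kP n) × G) →₀ ℤ) →+ ((Fin (kQ n) × G) →₀ ℤ))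
      (f' : ((Fin (kP (n+1)) × G) →₀ ℤ) →+ ((Fin (kQ (n+1)) × G) →₀ ℤ))
      (g : ((Fin (kQ n) × G) →₀ ℤ) →+ ((Fin (kP n) × G) →₀ ℤ))
      (g' : ((Fin (kQ (n+1)) × G) →₀ ℤ) →+ ((Fin (kP (n+1)) × G) →₀ ℤ))
      (h : ((Fin (kP n) × G) →₀ ℤ) →+ ((Fin (kP (n+1)) × G) →₀ ℤ))
      (h' : ((Fin (kP (n+1)) × G) →₀ ℤ) →+ ((Fin (kP (n+2)) × G) →₀ ℤ)),
      Eqv f' ∧ Eqv g' ∧ Eqv h' ∧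
      (∀ x, δQ n (f' x) = f (δP n x)) ∧ (∀ x, δP n (g' x) = g (δQ n x)) ∧
      (∀ x, δP (n+1) (h' x) = g' (f' x) - x - h (δP n x)) := by
    intro n
    induction n with
    | zero =>
      intro _
      obtain ⟨f, fe, hf⟩ := lift_exists (fun g m => g • m) εP hεPequiv εQ hεQequiv
        (fun x => hεQsurj _)
      obtain ⟨g, ge, hg⟩ := lift_exists (fun g m => g • m) εQ hεQequiv εP hεPequiv
        (fun x => hεPsurj _)
      obtain ⟨f', fe', hf'⟩ := lift_exists gactF (f.comp (δP 0))
        (fe.comp (hδPequiv 0 (by omega))) (δQ 0) (hδQequiv 0 (by omega))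
        (fun x => (hQ0 _).1 (by simp [hf, hPP0]))
      obtain ⟨g', ge', hg'⟩ := lift_exists gactF (g.comp (δQ 0))
        (ge.comp (hδQequiv 0 (by omega))) (δP 0) (hδPequiv 0 (by omega))
        (fun x => (hP0 _).1 (by simp [hg, hQQ0]))
      obtain ⟨h, he, hh⟩ := lift_exists gactF (g.comp f - AddMonoidHom.id _)
        ((ge.comp fe).sub Eqv.id) (δP 0) (hδPequiv 0 (by omega))
        (fun x => (hP0 _).1 (by simp [hg, hf]))
      obtain ⟨h', he', hh'⟩ := lift_exists gactF
        (g'.comp f' - AddMonoidHom.id _ - h.comp (δP 0))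
        (((ge'.comp fe').sub Eqv.id).sub (he.comp (hδPequiv 0 (by omega))))
        (δP 1) (hδPequiv 1 (by omega))
        (fun x => (hPexact 0 (by omega) _).1 (by
          simp only [AddMonoidHom.sub_apply, AddMonoidHom.comp_apply, AddMonoidHom.id_apply,
            map_sub] at *
          rw [hg', hf', hh]; abel))
      exact ⟨f, f', g, g', h, h', fe', ge', he', hf', hg', hh'⟩
    | succ n ih =>
      intro hn
      obtain ⟨f0, f, g0, g, h0, h, fe, ge, he, hf, hg, hh⟩ := ih (by omega)
      obtain ⟨f', fe', hf'⟩ := lift_exists gactF (f.comp (δP (n+1)))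
        (fe.comp (hδPequiv (n+1) (by omega))) (δQ (n+1)) (hδQequiv (n+1) (by omega))
        (fun x => (hQexact n (by omega) _).1 (by simp [hf, hPP n (by omega)]))
      obtain ⟨g', ge', hg'⟩ := lift_exists gactF (g.comp (δQ (n+1)))
        (ge.comp (hδQequiv (n+1) (by omega))) (δP (n+1)) (hδPequiv (n+1) (by omega))
        (fun x => (hPexact n (by omega) _).1 (by simp [hg, hQQ n (by omega)]))
      obtain ⟨h', he', hh'⟩ := lift_exists gactF
        (g'.comp f' - AddMonoidHom.id _ - h.comp (δP (n+1)))
        (((ge'.comp fe').sub Eqv.id).sub (he.comp (hδPequiv (n+1) (by omega))))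
        (δP (n+1+1)) (hδPequiv (n+1+1) (by omega))
        (fun x => (hPexact (n+1) (by omega) _).1 (by
          simp only [AddMonoidHom.sub_apply, AddMonoidHom.comp_apply, AddMonoidHom.id_apply,
            map_sub] at *
          rw [hg', hf', hh, hPP n (by omega), map_zero]; abel))
      exact ⟨f, f', g, g', h, h', fe', ge', he', hf', hg', hh'⟩
  obtain ⟨f0, f, g0, g, h0, h, fe, ge, he, hf, hg, hh⟩ := key e le_rfl
  obtain ⟨g', ge', hg'⟩ := lift_exists gactF (g.comp (δQ (e+1)))
    (ge.comp (hδQequiv (e+1) (by omega))) (δP (e+1)) (hδPequiv (e+1) (by omega))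
    (fun x => (hPexact e (by omega) _).1 (by simp [hg, hQQ e (by omega)]))
  obtain ⟨A, hA⟩ := bounded f fe
  obtain ⟨B, hB⟩ := bounded g' ge'
  obtain ⟨D, hD⟩ := bounded h he
  refine ⟨A + B + D, fun C hC n => ?_⟩
  apply sSup_le
  rintro v ⟨x, hx, hxn, rfl⟩
  have hfx : δQ e (f x) = 0 := by rw [hf, hx, map_zero]
  have hl : l1 (f x) ≤ C * n + C :=
    ((hA x).trans (Nat.mul_le_mul (by omega : A ≤ C) hxn)).trans (by omega)
  have hFV : fillNorm (δQ (e+1)) (f x) ≤ FV (δQ (e + 1)) (δQ e) (C * n + C) :=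
    le_sSup ⟨f x, hfx, hl, rfl⟩
  obtain ⟨y0, hy0⟩ := (hQexact e (by omega) _).1 hfx
  haveI : Nonempty {y // δQ (e+1) y = f x} := ⟨⟨y0, hy0⟩⟩
  obtain ⟨⟨y, hy⟩, hmin⟩ := ENat.exists_eq_iInf
    (fun y : {y // δQ (e+1) y = f x} => ((l1 y.1 : ℕ) : ℕ∞))
  have hmin' : ((l1 y : ℕ) : ℕ∞) = fillNorm (δQ (e+1)) (f x) := hmin
  have hz : δP (e+1) (g' y - h x) = x := by
    rw [map_sub, hg', hh, hx, map_zero, AddMonoidHom.comp_apply, hy]; abel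
  have h1 : fillNorm (δP (e+1)) x ≤ ((l1 (g' y - h x) : ℕ) : ℕ∞) :=
    iInf_le (fun y : {y // δP (e+1) y = x} => ((l1 y.1 : ℕ) : ℕ∞)) ⟨_, hz⟩
  have h2 : l1 (g' y - h x) ≤ C * l1 y + (C * n + C) := by
    have e1 := (hB y).trans (Nat.mul_le_mul_right _ (by omega : B ≤ C))
    have e2 := (hD x).trans (Nat.mul_le_mul (by omega : D ≤ C) hxn)
    have := l1_sub (g' y) (h x)
    omega
  calc _ ≤ _ := h1
    _ ≤ ((C * l1 y + (C * n + C) : ℕ) : ℕ∞) := by exact_mod_cast h2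
    _ = (C : ℕ∞) * ((l1 y : ℕ) : ℕ∞) + ((C * n + C : ℕ) : ℕ∞) := by push_cast; rfl
    _ ≤ _ := by rw [hmin']; gcongr

end Helpers

/-- The growth rate class of the (d+1)-dimensional filling function of a
ℤG-module `M` of type `FP_{d+1}` depends only on `M`: given two partial
resolutions `P_{d+1} → ⋯ → P_0 → M → 0` and `Q_{d+1} → ⋯ → Q_0 → M → 0` by
finitely generated free ℤG-modules with chosen finite bases (here `d = e + 1`,
so that `d ≥ 1`, and the free module with basis of cardinality `k i` is the
permutation module on `Fin (k i) × G`), the two filling functions are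
equivalent. -/
theorem stmt_13 {G : Type*} [Group G] (e : ℕ)
    (M : Type*) [AddCommGroup M] [DistribMulAction G M]
    (kP kQ : ℕ → ℕ)
    (δP : ∀ i : ℕ, ((Fin (kP (i + 1)) × G) →₀ ℤ) →+ ((Fin (kP i) × G) →₀ ℤ))
    (εP : ((Fin (kP 0) × G) →₀ ℤ) →+ M)
    (δQ : ∀ i : ℕ, ((Fin (kQ (i + 1)) × G) →₀ ℤ) →+ ((Fin (kQ i) × G) →₀ ℤ))
    (εQ : ((Fin (kQ 0) × G) →₀ ℤ) →+ M)
    -- the maps of the resolutions are G-equivariant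
    (hδPequiv : ∀ i ≤ e + 1, ∀ (g : G) (x : (Fin (kP (i + 1)) × G) →₀ ℤ),
      δP i (gactF g x) = gactF g (δP i x))
    (hεPequiv : ∀ (g : G) (x : (Fin (kP 0) × G) →₀ ℤ), εP (gactF g x) = g • εP x)
    (hδQequiv : ∀ i ≤ e + 1, ∀ (g : G) (x : (Fin (kQ (i + 1)) × G) →₀ ℤ),
      δQ i (gactF g x) = gactF g (δQ i x))
    (hεQequiv : ∀ (g : G) (x : (Fin (kQ 0) × G) →₀ ℤ), εQ (gactF g x) = g • εQ x)
    -- the maps to M are surjective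
    (hεPsurj : Function.Surjective εP) (hεQsurj : Function.Surjective εQ)
    -- exactness at P₀ and at P_i for 1 ≤ i ≤ d = e + 1, and likewise for Q
    (hP0 : ∀ x, εP x = 0 ↔ ∃ y, δP 0 y = x)
    (hPexact : ∀ i < e + 1, ∀ x, δP i x = 0 ↔ ∃ y, δP (i + 1) y = x)
    (hQ0 : ∀ x, εQ x = 0 ↔ ∃ y, δQ 0 y = x)
    (hQexact : ∀ i < e + 1, ∀ x, δQ i x = 0 ↔ ∃ y, δQ (i + 1) y = x) :
    ∃ C : ℕ, 0 < C ∧ ∀ n : ℕ,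
      FV (δP (e + 1)) (δP e) n ≤
        (C : ℕ∞) * FV (δQ (e + 1)) (δQ e) (C * n + C) + ((C * n + C : ℕ) : ℕ∞) ∧
      FV (δQ (e + 1)) (δQ e) n ≤
        (C : ℕ∞) * FV (δP (e + 1)) (δP e) (C * n + C) + ((C * n + C : ℕ) : ℕ∞) := by
  obtain ⟨C₁, h₁⟩ := one_dir e M kP kQ δP εP δQ εQ hδPequiv hεPequiv hδQequiv hεQequiv
    hεPsurj hεQsurj hP0 hPexact hQ0 hQexact
  obtain ⟨C₂, h₂⟩ := one_dir e M kQ kP δQ εQ δP εP hδQequiv hεQequiv hδPequiv hεPequiv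
    hεQsurj hεPsurj hQ0 hQexact hP0 hPexact
  exact ⟨C₁ + C₂ + 1, by omega, fun n => ⟨h₁ _ (by omega) n, h₂ _ (by omega) n⟩⟩
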